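/- arXiv:1412.2206 — 2 statements merged into one kernel-verified Lean document; each statement's English description precedes it below -/
import Mathlib

section
/- For every x∈ℝ^K, Q∈Δ(L)^K, ζ∈ℝ^K and every evaluation θ, the dual game 𝒟[𝒢_θ](x,Q;ζ) has a value: w^-_θ(x,Q;ζ) = w^+_θ(x,Q;ζ). -/
open scoped BigOperators

noncomputable section RepeatedGames

/-- Probability of a finite history (list of action pairs, in chronological
order) under behavioral strategies `s`, `t` (which map the list of past action
pairs to a mixed action). -/
def probH {I J : Type*} (s : List (I × J) → I → ℝ) (t : List (I × J) → J → ℝ) :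
    List (I × J) → ℝ
  | [] => 1
  | a :: h =>
      s [] a.1 * t [] a.2 *
        probH (fun h' => s (a :: h')) (fun h' => t (a :: h')) h

/-- Expected stage payoff at stage `m+1` (i.e. after `m` completed stages). -/
def stagePay {I J : Type*} [Fintype I] [Fintype J]
    (s : List (I × J) → I → ℝ) (t : List (I × J) → J → ℝ)
    (g : I → J → ℝ) (m : ℕ) : ℝ :=
  ∑ h : Fin m → I × J,
    probH s t (List.ofFn h) *
      ∑ i, ∑ j, s (List.ofFn h) i * t (List.ofFn h) j * g i j

/-- Behavioral strategies of a player with type set `X` and action set `A`,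
observing histories in `(I × J)^*`. -/
def Strat (I J X A : Type*) [Fintype A] : Type _ :=
  {f : X → List (I × J) → A → ℝ // ∀ x h, f x h ∈ stdSimplex ℝ A}

instance {I J X A : Type*} [Fintype A] [Nonempty A] :
    Nonempty (Strat I J X A) := by
  refine ⟨⟨fun _ _ _ => (Fintype.card A : ℝ)⁻¹, fun x h => ⟨fun a => by positivity, ?_⟩⟩⟩
  have hA : (Fintype.card A : ℝ) ≠ 0 := by
    exact_mod_cast Fintype.card_ne_zero
  simp [Finset.sum_const, Finset.card_univ, nsmul_eq_mul, mul_inv_cancel₀ hA]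

/-- The auxiliary `θ`-weighted payoff `γ_θ(π, ŝ, t̂; ζ)`. -/
def payA {I J K L : Type*} [Fintype I] [Fintype J] [Fintype K] [Fintype L]
    (θ : ℕ → ℝ) (G : K → L → I → J → ℝ) (π : K × L → ℝ) (ζ : K → ℝ)
    (s : Strat I J K I) (t : Strat I J L J) : ℝ :=
  ∑ k, ∑ l, π (k, l) * ζ k *
    ∑' m : ℕ, θ m * stagePay (s.1 k) (t.1 l) (G k l) m

/-- The `θ`-weighted payoff `γ_θ(π, ŝ, t̂)`. -/
def pay {I J K L : Type*} [Fintype I] [Fintype J] [Fintype K] [Fintype L]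
    (θ : ℕ → ℝ) (G : K → L → I → J → ℝ) (π : K × L → ℝ)
    (s : Strat I J K I) (t : Strat I J L J) : ℝ :=
  payA θ G π (fun _ => 1) s t

/-- Maxmin `v⁻_θ(π)` of the repeated game `𝒢_θ(π)`. -/
def vMinus {I J K L : Type*} [Fintype I] [Fintype J] [Fintype K] [Fintype L]
    (θ : ℕ → ℝ) (G : K → L → I → J → ℝ) (π : K × L → ℝ) : ℝ :=
  ⨆ s : Strat I J K I, ⨅ t : Strat I J L J, pay θ G π s t

/-- Minmax `v⁺_θ(π)` of the repeated game `𝒢_θ(π)`. -/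
def vPlus {I J K L : Type*} [Fintype I] [Fintype J] [Fintype K] [Fintype L]
    (θ : ℕ → ℝ) (G : K → L → I → J → ℝ) (π : K × L → ℝ) : ℝ :=
  ⨅ t : Strat I J L J, ⨆ s : Strat I J K I, pay θ G π s t

/-- Dual payoff `h_θ[x,Q;ζ](p,ŝ,t̂) = γ_θ(p⊗Q, ŝ, t̂; ζ) − ⟨p,x⟩`. -/
def hDual {I J K L : Type*} [Fintype I] [Fintype J] [Fintype K] [Fintype L]
    (θ : ℕ → ℝ) (G : K → L → I → J → ℝ) (x : K → ℝ) (Q : K → L → ℝ)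
    (ζ : K → ℝ) (p : K → ℝ) (s : Strat I J K I) (t : Strat I J L J) : ℝ :=
  payA θ G (fun kl => p kl.1 * Q kl.1 kl.2) ζ s t - ∑ k, p k * x k

/-- Maxmin `w⁻_θ(x,Q;ζ)` of the dual game `𝒟[𝒢_θ](x,Q;ζ)`. -/
def wMinus {I J K L : Type*} [Fintype I] [Fintype J] [Fintype K] [Fintype L]
    (θ : ℕ → ℝ) (G : K → L → I → J → ℝ) (x : K → ℝ) (Q : K → L → ℝ)
    (ζ : K → ℝ) : ℝ :=
  ⨆ ps : stdSimplex ℝ K × Strat I J K I, ⨅ t : Strat I J L J,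
    hDual θ G x Q ζ (ps.1 : K → ℝ) ps.2 t

/-- Minmax `w⁺_θ(x,Q;ζ)` of the dual game `𝒟[𝒢_θ](x,Q;ζ)`. -/
def wPlus {I J K L : Type*} [Fintype I] [Fintype J] [Fintype K] [Fintype L]
    (θ : ℕ → ℝ) (G : K → L → I → J → ℝ) (x : K → ℝ) (Q : K → L → ℝ)
    (ζ : K → ℝ) : ℝ :=
  ⨅ t : Strat I J L J, ⨆ ps : stdSimplex ℝ K × Strat I J K I,
    hDual θ G x Q ζ (ps.1 : K → ℝ) ps.2 t

end RepeatedGames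

open Set Topology Filter

theorem fan_minimax {X Y : Type*} [Nonempty X] [Nonempty Y] [TopologicalSpace Y] [CompactSpace Y]
    (f : X → Y → ℝ) (hc : ∀ x, Continuous (f x)) (B : ℝ) (hB : ∀ x y, |f x y| ≤ B)
    (hX : ∀ (t : Finset X) (w : t → ℝ), w ∈ stdSimplex ℝ t →
      ∃ x, ∀ y, f x y = ∑ i, w i * f i y)
    (hY : ∀ (w : Fin 2 → ℝ) (ys : Fin 2 → Y), w ∈ stdSimplex ℝ (Fin 2) →
      ∃ y, ∀ x, f x y = ∑ i, w i * f x (ys i)) :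
    (⨆ x, ⨅ y, f x y) = ⨅ y, ⨆ x, f x y := by
  have hb1 : ∀ x, BddBelow (range (f x)) := fun x =>
    ⟨-B, by rintro _ ⟨y, rfl⟩; exact (abs_le.1 (hB x y)).1⟩
  have hb2 : ∀ y, BddAbove (range fun x => f x y) := fun y =>
    ⟨B, by rintro _ ⟨x, rfl⟩; exact (abs_le.1 (hB x y)).2⟩
  have hb3 : BddAbove (range fun x => ⨅ y, f x y) := by
    refine ⟨B, ?_⟩
    rintro _ ⟨x, rfl⟩
    exact (ciInf_le (hb1 x) (Classical.arbitrary Y)).trans (abs_le.1 (hB x _)).2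
  have hb4 : BddBelow (range fun y => ⨆ x, f x y) := by
    refine ⟨-B, ?_⟩
    rintro _ ⟨y, rfl⟩
    exact (abs_le.1 (hB _ _)).1.trans (le_ciSup (hb2 y) (Classical.arbitrary X))
  apply le_antisymm
  · exact ciSup_le fun x => le_ciInf fun y => (ciInf_le (hb1 x) y).trans (le_ciSup (hb2 y) x)
  · apply le_of_forall_lt_imp_le_of_dense
    intro c hcl
    have h1 : ∀ y, ∃ x, c < f x y := fun y =>
      exists_lt_of_lt_ciSup (hcl.trans_le (ciInf_le hb4 y))
    obtain ⟨t, ht⟩ := isCompact_univ.elim_finite_subcover (fun x => {y | c < f x y})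
      (fun x => isOpen_lt continuous_const (hc x))
      (fun y _ => by obtain ⟨x, hx⟩ := h1 y; exact mem_iUnion.2 ⟨x, hx⟩)
    have ht' : ∀ y, ∃ i : t, c < f i y := by
      intro y
      have := ht (mem_univ y)
      simp only [mem_iUnion] at this
      obtain ⟨x, hx, h⟩ := this
      exact ⟨⟨x, hx⟩, h⟩
    have hO : IsOpen (Set.pi univ fun _ : t => Iio c) := isOpen_set_pi finite_univ fun _ _ => isOpen_Iio
    have hOc : Convex ℝ (Set.pi univ fun _ : t => Iio c) := convex_pi fun _ _ => convex_Iio c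
    have hC : Convex ℝ {z : t → ℝ | ∃ y, ∀ i : t, f i y ≤ z i} := by
      rintro z1 ⟨y1, h1⟩ z2 ⟨y2, h2⟩ a b ha hb hab
      obtain ⟨y, hy⟩ := hY ![a, b] ![y1, y2]
        ⟨by intro i; fin_cases i <;> simp [ha, hb], by simp [hab]⟩
      refine ⟨y, fun i => ?_⟩
      rw [hy]
      simp only [Fin.sum_univ_two, Matrix.cons_val_zero, Matrix.cons_val_one, Pi.add_apply,
        Pi.smul_apply, smul_eq_mul]
      exact add_le_add (mul_le_mul_of_nonneg_left (h1 i) ha) (mul_le_mul_of_nonneg_left (h2 i) hb)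
    have hd : Disjoint (Set.pi univ fun _ : t => Iio c) {z : t → ℝ | ∃ y, ∀ i : t, f i y ≤ z i} := by
      rw [Set.disjoint_left]
      rintro z hz ⟨y, hy⟩
      obtain ⟨i, hi⟩ := ht' y
      exact absurd (hz i (mem_univ i)) (not_lt.2 (hi.le.trans (hy i)))
    obtain ⟨φ, u, hφ1, hφ2⟩ := geometric_hahn_banach_open hOc hO hC hd
    classical
    set lam : t → ℝ := fun i => φ (Pi.single i 1) with hlam
    have hφ : ∀ z : t → ℝ, φ z = ∑ i, lam i * z i := by
      intro z
      conv_lhs => rw [pi_eq_sum_univ' z]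
      rw [map_sum]
      refine Finset.sum_congr rfl fun i _ => ?_
      rw [map_smul, smul_eq_mul, mul_comm, hlam]
    obtain ⟨y0⟩ := (inferInstance : Nonempty Y)
    have hpos : ∀ i, 0 ≤ lam i := by
      intro i
      by_contra hneg
      push Not at hneg
      have key : ∀ r : ℝ, 0 ≤ r → u ≤ φ (fun j => f j y0) + r * lam i := by
        intro r hr
        have := hφ2 ((fun j : t => f j y0) + r • Pi.single i 1) ⟨y0, fun j => by
          have : 0 ≤ (Pi.single i 1 : t → ℝ) j := by
            by_cases h : j = i
            · subst h; simp
            · simp [h]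
          simp only [Pi.add_apply, Pi.smul_apply, smul_eq_mul]
          nlinarith [mul_nonneg hr this]⟩
        rwa [map_add, map_smul, smul_eq_mul] at this
      have h0 := key 0 le_rfl
      have h2 := key ((φ (fun j => f j y0) - u + 1) / (- lam i))
        (div_nonneg (by linarith) (by linarith))
      have h3 : (φ (fun j : t => f j y0) - u + 1) / (- lam i) * lam i
          = -(φ (fun j : t => f j y0) - u + 1) := by
        field_simp [hneg.ne]
      linarith
    have hsum : 0 < ∑ i, lam i := by
      rcases (Finset.sum_nonneg fun i _ => hpos i).lt_or_eq with h | h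
      · exact h
      · exfalso
        have hz : ∀ i, lam i = 0 := fun i =>
          (Finset.sum_eq_zero_iff_of_nonneg fun i _ => hpos i).1 h.symm i (Finset.mem_univ i)
        have ha := hφ1 (fun _ => c - 1) (fun i _ => by simp)
        have hb := hφ2 (fun j => f j y0) ⟨y0, fun _ => le_rfl⟩
        rw [hφ] at ha hb
        simp only [hz, zero_mul, Finset.sum_const_zero] at ha hb
        linarith
    have hcu : c * ∑ i, lam i ≤ u := by
      apply le_of_forall_pos_lt_add
      intro ε hε
      have := hφ1 (fun _ => c - ε / ∑ i, lam i) (fun i _ => by simp; positivity)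
      rw [hφ, ← Finset.sum_mul] at this
      have h2 : (∑ i, lam i) * (c - ε / ∑ i, lam i) = c * (∑ i, lam i) - ε := by
        field_simp
      linarith
    obtain ⟨x, hx⟩ := hX t (fun i => lam i / ∑ i, lam i)
      ⟨fun i => div_nonneg (hpos i) hsum.le, by rw [← Finset.sum_div, div_self hsum.ne']⟩
    refine le_trans (le_ciInf fun y => ?_) (le_ciSup hb3 x)
    have := hφ2 (fun j => f j y) ⟨y, fun _ => le_rfl⟩
    rw [hφ] at this
    rw [hx]
    have e : ∑ i : t, lam i / (∑ i, lam i) * f i y = (∑ i : t, lam i * f i y) / ∑ i, lam i := by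
      rw [Finset.sum_div]
      exact Finset.sum_congr rfl fun i _ => by ring
    rw [e, le_div_iff₀ hsum]
    linarith

/-- own realization weight -/
def prodA {E A : Type*} (pr : E → A) (s : List E → A → ℝ) : List E → ℝ
  | [] => 1
  | a :: h => s [] (pr a) * prodA pr (fun h' => s (a :: h')) h

theorem prodA_append {E A : Type*} (pr : E → A) (s : List E → A → ℝ) (h : List E) (a : E) :
    prodA pr s (h ++ [a]) = prodA pr s h * s h (pr a) := by
  induction h generalizing s with
  | nil => simp [prodA]
  | cons b h ih => simp [prodA, ih, mul_assoc]

theorem prodA_nonneg {E A : Type*} (pr : E → A) (s : List E → A → ℝ) (hs : ∀ h a, 0 ≤ s h a)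
    (h : List E) : 0 ≤ prodA pr s h := by
  induction h generalizing s with
  | nil => simp [prodA]
  | cons b h ih => exact mul_nonneg (hs _ _) (ih _ fun _ _ => hs _ _)

theorem probH_eq {I J : Type*} (s : List (I × J) → I → ℝ) (t : List (I × J) → J → ℝ)
    (h : List (I × J)) : probH s t h = prodA Prod.fst s h * prodA Prod.snd t h := by
  induction h generalizing s t with
  | nil => simp [probH, prodA]
  | cons b h ih => simp only [probH, prodA, ih]; ring

theorem kuhn {E A ι : Type*} [Fintype A] [Fintype ι] (pr : E → A)
    (w : ι → ℝ) (hw : w ∈ stdSimplex ℝ ι) (s : ι → List E → A → ℝ)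
    (hs : ∀ c h, s c h ∈ stdSimplex ℝ A) :
    ∃ r : List E → A → ℝ, (∀ h, r h ∈ stdSimplex ℝ A) ∧
      ∀ h a, prodA pr r h * r h a = ∑ c, w c * (prodA pr (s c) h * s c h a) := by
  classical
  have hne : Nonempty ι := by
    by_contra hn
    rw [not_nonempty_iff] at hn
    simpa using hw.2
  obtain ⟨c0⟩ := hne
  set D : List E → ℝ := fun h => ∑ c, w c * prodA pr (s c) h with hD
  have hA0 : ∀ c h, 0 ≤ w c * prodA pr (s c) h := fun c h =>
    mul_nonneg (hw.1 c) (prodA_nonneg pr _ (fun h a => (hs c h).1 a) h)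
  have hD0 : ∀ h, 0 ≤ D h := fun h => Finset.sum_nonneg fun c _ => hA0 c h
  set r : List E → A → ℝ := fun h a => if D h = 0 then s c0 h a else
    (∑ c, w c * (prodA pr (s c) h * s c h a)) / D h with hr
  have hDr : ∀ h a, D h * r h a = ∑ c, w c * (prodA pr (s c) h * s c h a) := by
    intro h a
    by_cases hz : D h = 0
    · rw [hz, zero_mul]
      symm
      apply Finset.sum_eq_zero
      intro c _
      have := (Finset.sum_eq_zero_iff_of_nonneg fun c _ => hA0 c h).1 hz c (Finset.mem_univ c)
      rw [← mul_assoc, this, zero_mul]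
    · simp only [hr, hz, if_false]
      field_simp
  have hPr : ∀ h, prodA pr r h = D h := by
    intro h
    induction h using List.reverseRecOn with
    | nil => simp [hD, prodA, hw.2]
    | append_singleton h a ih =>
      rw [prodA_append, ih, hDr]
      simp [hD, prodA_append]
  refine ⟨r, fun h => ?_, fun h a => by rw [hPr, hDr]⟩
  by_cases hz : D h = 0
  · have : r h = s c0 h := by funext a; simp [hr, hz]
    rw [this]; exact hs c0 h
  · refine ⟨fun a => ?_, ?_⟩
    · simp only [hr, hz, if_false]
      refine div_nonneg (Finset.sum_nonneg fun c _ => ?_) (hD0 h)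
      rw [← mul_assoc]
      exact mul_nonneg (hA0 c h) ((hs c h).1 a)
    · have : D h * ∑ a, r h a = D h * 1 := by
        rw [Finset.mul_sum]
        simp only [hDr]
        rw [Finset.sum_comm, mul_one]
        refine Finset.sum_congr rfl fun c _ => ?_
        rw [← Finset.mul_sum, ← Finset.mul_sum, (hs c h).2, mul_one]
      exact mul_left_cancel₀ hz this

theorem stagePay_eq {I J : Type*} [Fintype I] [Fintype J]
    (s : List (I × J) → I → ℝ) (t : List (I × J) → J → ℝ) (g : I → J → ℝ) (m : ℕ) :
    stagePay s t g m = ∑ h : Fin m → I × J, ∑ i, ∑ j,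
      (prodA Prod.fst s (List.ofFn h) * s (List.ofFn h) i) *
      (prodA Prod.snd t (List.ofFn h) * t (List.ofFn h) j) * g i j := by
  unfold stagePay
  refine Finset.sum_congr rfl fun h _ => ?_
  rw [Finset.mul_sum]
  refine Finset.sum_congr rfl fun i _ => ?_
  rw [Finset.mul_sum]
  refine Finset.sum_congr rfl fun j _ => ?_
  rw [probH_eq]; ring

theorem sum_probH {I J : Type*} [Fintype I] [Fintype J]
    (s : List (I × J) → I → ℝ) (t : List (I × J) → J → ℝ)
    (hs : ∀ h, s h ∈ stdSimplex ℝ I) (ht : ∀ h, t h ∈ stdSimplex ℝ J) (m : ℕ) :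
    ∑ h : Fin m → I × J, probH s t (List.ofFn h) = 1 := by
  induction m generalizing s t with
  | zero => simp [probH]
  | succ m ih =>
    rw [← (Fin.consEquiv fun _ => I × J).sum_comp, Fintype.sum_prod_type]
    simp only [Fin.consEquiv, Equiv.coe_fn_mk, List.ofFn_succ, Fin.cons_zero, Fin.cons_succ, probH]
    simp only [← Finset.mul_sum, ih _ _ (fun h => hs _) (fun h => ht _), mul_one]
    rw [Fintype.sum_prod_type]
    simp only [← Finset.mul_sum, (ht _).2, mul_one, (hs _).2]

theorem stagePay_bound {I J : Type*} [Fintype I] [Fintype J]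
    (s : List (I × J) → I → ℝ) (t : List (I × J) → J → ℝ)
    (hs : ∀ h, s h ∈ stdSimplex ℝ I) (ht : ∀ h, t h ∈ stdSimplex ℝ J) (g : I → J → ℝ) (m : ℕ) :
    |stagePay s t g m| ≤ ∑ i, ∑ j, |g i j| := by
  have h1 : ∀ h i, s h i ≤ 1 := fun h i =>
    (hs h).2 ▸ Finset.single_le_sum (fun i _ => (hs h).1 i) (Finset.mem_univ i)
  have h2 : ∀ h i, t h i ≤ 1 := fun h i =>
    (ht h).2 ▸ Finset.single_le_sum (fun i _ => (ht h).1 i) (Finset.mem_univ i)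
  have hp : ∀ h, 0 ≤ probH s t h := fun h => by
    rw [probH_eq]
    exact mul_nonneg (prodA_nonneg _ _ (fun h => (hs h).1) h) (prodA_nonneg _ _ (fun h => (ht h).1) h)
  unfold stagePay
  calc _ ≤ ∑ h : Fin m → I × J, probH s t (List.ofFn h) * ∑ i, ∑ j, |g i j| := by
        refine (Finset.abs_sum_le_sum_abs _ _).trans (Finset.sum_le_sum fun h _ => ?_)
        rw [abs_mul, abs_of_nonneg (hp _)]
        refine mul_le_mul_of_nonneg_left ?_ (hp _)
        refine (Finset.abs_sum_le_sum_abs _ _).trans (Finset.sum_le_sum fun i _ => ?_)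
        refine (Finset.abs_sum_le_sum_abs _ _).trans (Finset.sum_le_sum fun j _ => ?_)
        rw [abs_mul, abs_of_nonneg (mul_nonneg ((hs _).1 _) ((ht _).1 _))]
        exact mul_le_of_le_one_left (abs_nonneg _) (mul_le_one₀ (h1 _ _) ((ht _).1 _) (h2 _ _))
    _ = _ := by rw [← Finset.sum_mul, sum_probH s t hs ht, one_mul]

instance stratTop {I J X A : Type*} [Fintype A] : TopologicalSpace (Strat I J X A) :=
  instTopologicalSpaceSubtype

instance stratCompact {I J X A : Type*} [Fintype A] : CompactSpace (Strat I J X A) := by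
  have : IsCompact {f : X → List (I × J) → A → ℝ | ∀ x h, f x h ∈ stdSimplex ℝ A} := by
    have := isCompact_univ_pi (fun _ : X => isCompact_univ_pi
      (fun _ : List (I × J) => isCompact_stdSimplex ℝ A))
    convert this using 1
    ext f; simp
  exact isCompact_iff_compactSpace.1 this

theorem continuous_strat {I J X A : Type*} [Fintype A] (x : X) (h : List (I × J)) (a : A) :
    Continuous fun s : Strat I J X A => s.1 x h a := by
  have : Continuous fun s : Strat I J X A => s.1 := continuous_subtype_val
  exact (continuous_apply a).comp ((continuous_apply h).comp ((continuous_apply x).comp this))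

theorem continuous_prodA {Z E A : Type*} [TopologicalSpace Z] (pr : E → A)
    (s : Z → List E → A → ℝ) (hs : ∀ h a, Continuous fun z => s z h a) (h : List E) :
    Continuous fun z => prodA pr (s z) h := by
  induction h generalizing s with
  | nil => simpa [prodA] using continuous_const
  | cons a h ih => exact (hs _ _).mul (ih (fun z h' => s z (a :: h')) fun _ _ => hs _ _)

/-- the total payoff given types -/
noncomputable def totPay {I J : Type*} [Fintype I] [Fintype J] (θ : ℕ → ℝ)
    (g : I → J → ℝ) (s : List (I × J) → I → ℝ) (t : List (I × J) → J → ℝ) : ℝ :=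
  ∑' m : ℕ, θ m * stagePay s t g m

theorem stage_summable {I J : Type*} [Fintype I] [Fintype J] (θ : ℕ → ℝ)
    (hθ0 : ∀ m, 0 ≤ θ m) (hθ1 : HasSum θ 1)
    (g : I → J → ℝ) (s : List (I × J) → I → ℝ) (t : List (I × J) → J → ℝ)
    (hs : ∀ h, s h ∈ stdSimplex ℝ I) (ht : ∀ h, t h ∈ stdSimplex ℝ J) :
    Summable fun m => θ m * stagePay s t g m := by
  refine Summable.of_norm_bounded (hθ1.summable.mul_right (∑ i, ∑ j, |g i j|)) fun m => ?_
  rw [Real.norm_eq_abs, abs_mul, abs_of_nonneg (hθ0 m)]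
  exact mul_le_mul_of_nonneg_left (stagePay_bound s t hs ht g m) (hθ0 m)

theorem totPay_of_stage {I J ι : Type*} [Fintype I] [Fintype J] [Fintype ι] (θ : ℕ → ℝ)
    (hθ0 : ∀ m, 0 ≤ θ m) (hθ1 : HasSum θ 1)
    (g : I → J → ℝ) (w : ι → ℝ) (s : ι → List (I × J) → I → ℝ) (t : ι → List (I × J) → J → ℝ)
    (hs : ∀ c h, s c h ∈ stdSimplex ℝ I) (ht : ∀ c h, t c h ∈ stdSimplex ℝ J)
    (s' : List (I × J) → I → ℝ) (t' : List (I × J) → J → ℝ)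
    (he : ∀ m, stagePay s' t' g m = ∑ c, w c * stagePay (s c) (t c) g m) :
    totPay θ g s' t' = ∑ c, w c * totPay θ g (s c) (t c) := by
  have h := fun c (_ : c ∈ (Finset.univ : Finset ι)) =>
    ((stage_summable θ hθ0 hθ1 g (s c) (t c) (hs c) (ht c)).mul_left (w c))
  unfold totPay
  simp only [← tsum_mul_left]
  rw [← Summable.tsum_finsetSum h]
  refine tsum_congr fun m => ?_
  rw [he, Finset.mul_sum]
  exact Finset.sum_congr rfl fun c _ => by ring

theorem stage_mix1 {I J ι : Type*} [Fintype I] [Fintype J] [Fintype ι]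
    (g : I → J → ℝ) (w : ι → ℝ) (s : ι → List (I × J) → I → ℝ) (t : List (I × J) → J → ℝ)
    (r : List (I × J) → I → ℝ)
    (hr : ∀ h a, prodA Prod.fst r h * r h a = ∑ c, w c * (prodA Prod.fst (s c) h * s c h a))
    (m : ℕ) : stagePay r t g m = ∑ c, w c * stagePay (s c) t g m := by
  simp only [stagePay_eq, hr, Finset.mul_sum, Finset.sum_mul]
  rw [Finset.sum_comm]
  conv_rhs => rw [Finset.sum_comm]
  rw [Finset.sum_comm]
  refine Finset.sum_congr rfl fun h _ => ?_
  conv_rhs => rw [Finset.sum_comm]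
  refine Finset.sum_congr rfl fun i _ => ?_
  conv_rhs => rw [Finset.sum_comm]
  refine Finset.sum_congr rfl fun j _ => ?_
  exact Finset.sum_congr rfl fun c _ => by ring

theorem stage_mix2 {I J ι : Type*} [Fintype I] [Fintype J] [Fintype ι]
    (g : I → J → ℝ) (w : ι → ℝ) (s : List (I × J) → I → ℝ) (t : ι → List (I × J) → J → ℝ)
    (r : List (I × J) → J → ℝ)
    (hr : ∀ h a, prodA Prod.snd r h * r h a = ∑ c, w c * (prodA Prod.snd (t c) h * t c h a))
    (m : ℕ) : stagePay s r g m = ∑ c, w c * stagePay s (t c) g m := by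
  simp only [stagePay_eq, hr, Finset.mul_sum, Finset.sum_mul]
  conv_rhs => rw [Finset.sum_comm]
  refine Finset.sum_congr rfl fun h _ => ?_
  conv_rhs => rw [Finset.sum_comm]
  refine Finset.sum_congr rfl fun i _ => ?_
  conv_rhs => rw [Finset.sum_comm]
  refine Finset.sum_congr rfl fun j _ => ?_
  exact Finset.sum_congr rfl fun c _ => by ring

theorem hDual_eq {I J K L : Type*} [Fintype I] [Fintype J] [Fintype K] [Fintype L]
    (θ : ℕ → ℝ) (G : K → L → I → J → ℝ) (x : K → ℝ) (Q : K → L → ℝ)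
    (ζ : K → ℝ) (p : K → ℝ) (s : Strat I J K I) (t : Strat I J L J) :
    hDual θ G x Q ζ p s t =
      ∑ k, p k * ((∑ l, Q k l * ζ k * totPay θ (G k l) (s.1 k) (t.1 l)) - x k) := by
  unfold hDual payA totPay
  rw [← Finset.sum_sub_distrib]
  refine Finset.sum_congr rfl fun k _ => ?_
  rw [mul_sub, Finset.mul_sum]
  congr 1
  exact Finset.sum_congr rfl fun l _ => by ring

theorem continuous_hDual {I J K L : Type*} [Fintype I] [Fintype J] [Fintype K] [Fintype L]
    (θ : ℕ → ℝ) (hθ0 : ∀ m, 0 ≤ θ m) (hθ1 : HasSum θ 1)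
    (G : K → L → I → J → ℝ) (x : K → ℝ) (Q : K → L → ℝ) (ζ : K → ℝ) :
    Continuous fun z : (stdSimplex ℝ K × Strat I J K I) × Strat I J L J =>
      hDual θ G x Q ζ (z.1.1 : K → ℝ) z.1.2 z.2 := by
  simp only [hDual_eq]
  refine continuous_finsetSum _ fun k _ => Continuous.mul ?_ (Continuous.sub ?_ continuous_const)
  · exact (continuous_apply k).comp (continuous_subtype_val.comp (continuous_fst.comp continuous_fst))
  refine continuous_finsetSum _ fun l _ => continuous_const.mul ?_
  unfold totPay
  refine continuous_tsum (u := fun m => θ m * ∑ i, ∑ j, |G k l i j|) (fun m => ?_)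
    (hθ1.summable.mul_right _) fun m z => ?_
  · refine continuous_const.mul ?_
    simp only [stagePay_eq]
    have h1 : ∀ h a, Continuous fun z : (stdSimplex ℝ K × Strat I J K I) × Strat I J L J =>
        z.1.2.1 k h a := fun h a =>
      (continuous_strat k h a).comp (continuous_snd.comp continuous_fst)
    have h2 : ∀ h a, Continuous fun z : (stdSimplex ℝ K × Strat I J K I) × Strat I J L J =>
        z.2.1 l h a := fun h a => (continuous_strat l h a).comp continuous_snd
    refine continuous_finsetSum _ fun h _ => continuous_finsetSum _ fun i _ =>
      continuous_finsetSum _ fun j _ => ?_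
    exact (((continuous_prodA _ _ h1 _).mul (h1 _ _)).mul
      ((continuous_prodA _ _ h2 _).mul (h2 _ _))).mul continuous_const
  · rw [Real.norm_eq_abs, abs_mul, abs_of_nonneg (hθ0 m)]
    exact mul_le_mul_of_nonneg_left (stagePay_bound _ _ (z.1.2.2 k) (z.2.2 l) _ m) (hθ0 m)

/-- for every `x ∈ ℝ^K`, `Q ∈ Δ(L)^K`, `ζ ∈ ℝ^K` and every
evaluation `θ`, the dual game `𝒟[𝒢_θ](x,Q;ζ)` has a value:
`w⁻_θ(x,Q;ζ) = w⁺_θ(x,Q;ζ)`. -/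
theorem stmt_11
    {K L I J : Type*} [Fintype K] [Fintype L] [Fintype I] [Fintype J]
    [Nonempty K] [Nonempty L] [Nonempty I] [Nonempty J]
    (G : K → L → I → J → ℝ)
    (θ : ℕ → ℝ) (hθ0 : ∀ m, 0 ≤ θ m) (hθ1 : HasSum θ 1)
    (x : K → ℝ) (Q : K → L → ℝ) (hQ : ∀ k, Q k ∈ stdSimplex ℝ L)
    (ζ : K → ℝ) :
    wMinus (I := I) (J := J) θ G x Q ζ = wPlus (I := I) (J := J) θ G x Q ζ := by
  classical
  have : CompactSpace (stdSimplex ℝ K) := isCompact_iff_compactSpace.1 (isCompact_stdSimplex ℝ K)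
  have : Nonempty (stdSimplex ℝ K) :=
    ⟨⟨Pi.single (Classical.arbitrary K) 1, single_mem_stdSimplex ℝ _⟩⟩
  have hcont := continuous_hDual (I := I) (J := J) θ hθ0 hθ1 G x Q ζ
  obtain ⟨B, hB⟩ := isCompact_univ.exists_bound_of_continuousOn hcont.continuousOn
  unfold wMinus wPlus
  refine fan_minimax (fun (ps : stdSimplex ℝ K × Strat I J K I) (t : Strat I J L J) =>
    hDual θ G x Q ζ (ps.1 : K → ℝ) ps.2 t) ?_ B ?_ ?_ ?_
  · intro ps
    exact Continuous.comp (g := fun z : (stdSimplex ℝ K × Strat I J K I) × Strat I J L J =>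
      hDual θ G x Q ζ (z.1.1 : K → ℝ) z.1.2 z.2) (f := fun t => (ps, t)) hcont
      (continuous_const.prodMk continuous_id)
  · intro ps t
    have h := hB (ps, t) (mem_univ _)
    rw [Real.norm_eq_abs] at h
    exact h
  · intro T w hw
    set p : K → ℝ := fun k => ∑ i : T, w i * i.1.1.1 k with hp
    have hp0 : ∀ (i : T) k, 0 ≤ w i * i.1.1.1 k := fun i k =>
      mul_nonneg (hw.1 i) (i.1.1.2.1 k)
    have hpm : p ∈ stdSimplex ℝ K := by
      refine ⟨fun k => Finset.sum_nonneg fun i _ => hp0 i k, ?_⟩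
      simp only [hp]
      rw [Finset.sum_comm]
      simp only [← Finset.mul_sum]
      rw [← hw.2]
      exact Finset.sum_congr rfl fun i _ => by rw [i.1.1.2.2, mul_one]
    have hμ : ∀ k, ∃ μ : T → ℝ, μ ∈ stdSimplex ℝ T ∧ ∀ i, p k * μ i = w i * i.1.1.1 k := by
      intro k
      by_cases hz : p k = 0
      · refine ⟨w, hw, fun i => ?_⟩
        rw [hz, zero_mul]
        exact ((Finset.sum_eq_zero_iff_of_nonneg fun i _ => hp0 i k).1 hz i (Finset.mem_univ i)).symm
      · refine ⟨fun i => w i * i.1.1.1 k / p k,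
          ⟨fun i => div_nonneg (hp0 i k) (hpm.1 k), ?_⟩, fun i => ?_⟩
        · rw [← Finset.sum_div]
          exact div_self hz
        · field_simp
    choose μ hμ1 hμ2 using hμ
    choose r hr1 hr2 using fun k => kuhn (Prod.fst : I × J → I) (μ k) (hμ1 k)
      (fun i : T => i.1.2.1 k) (fun i h => i.1.2.2 k h)
    obtain ⟨R, hR⟩ : ∃ R : Strat I J K I, R.1 = r := ⟨⟨r, hr1⟩, rfl⟩
    obtain ⟨P, hP⟩ : ∃ P : stdSimplex ℝ K, P.1 = p := ⟨⟨p, hpm⟩, rfl⟩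
    refine ⟨(P, R), fun t => ?_⟩
    change hDual θ G x Q ζ P.1 R t = ∑ i : T, w i * hDual θ G x Q ζ i.1.1.1 i.1.2 t
    rw [hP]
    simp only [hDual_eq, hR]
    simp only [Finset.mul_sum (s := (Finset.univ : Finset K))]
    rw [Finset.sum_comm]
    refine Finset.sum_congr rfl fun k _ => ?_
    have e : ∀ l, totPay θ (G k l) (r k) (t.1 l) =
        ∑ i : T, μ k i * totPay θ (G k l) (i.1.2.1 k) (t.1 l) := fun l =>
      totPay_of_stage θ hθ0 hθ1 (G k l) (μ k) (fun i : T => i.1.2.1 k) (fun _ => t.1 l)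
        (fun i h => i.1.2.2 k h) (fun _ h => t.2 l h) _ _
        (stage_mix1 _ _ _ _ _ (hr2 k))
    simp only [← mul_assoc, ← hμ2]
    simp only [mul_assoc, ← Finset.mul_sum]
    congr 1
    simp only [mul_sub, Finset.sum_sub_distrib, ← Finset.sum_mul, (hμ1 k).2, one_mul]
    congr 1
    simp only [e, Finset.mul_sum]
    rw [Finset.sum_comm]
    exact Finset.sum_congr rfl fun i _ => Finset.sum_congr rfl fun l _ => by ring
  · intro w ts hw
    choose r hr1 hr2 using fun l => kuhn (Prod.snd : I × J → J) w hw
      (fun i => (ts i).1 l) (fun i h => (ts i).2 l h)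
    obtain ⟨R, hR⟩ : ∃ R : Strat I J L J, R.1 = r := ⟨⟨r, hr1⟩, rfl⟩
    refine ⟨R, fun ps => ?_⟩
    change hDual θ G x Q ζ ps.1.1 ps.2 R = ∑ i, w i * hDual θ G x Q ζ ps.1.1 ps.2 (ts i)
    have e : ∀ k l, totPay θ (G k l) (ps.2.1 k) (r l) =
        ∑ i, w i * totPay θ (G k l) (ps.2.1 k) ((ts i).1 l) := fun k l =>
      totPay_of_stage θ hθ0 hθ1 (G k l) w (fun _ => ps.2.1 k) (fun i => (ts i).1 l)
        (fun _ h => ps.2.2 k h) (fun i h => (ts i).2 l h) _ _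
        (stage_mix2 _ _ _ _ _ (hr2 l))
    simp only [hDual_eq, hR, e]
    have hw2 : w 0 + w 1 = 1 := by simpa using hw.2
    simp only [Fin.sum_univ_two, Finset.mul_sum (s := (Finset.univ : Finset K))]
    rw [← Finset.sum_add_distrib]
    refine Finset.sum_congr rfl fun k _ => ?_
    have e2 : ∑ l, Q k l * ζ k * (w 0 * totPay θ (G k l) (ps.2.1 k) ((ts 0).1 l) +
          w 1 * totPay θ (G k l) (ps.2.1 k) ((ts 1).1 l)) =
        w 0 * ∑ l, Q k l * ζ k * totPay θ (G k l) (ps.2.1 k) ((ts 0).1 l) +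
        w 1 * ∑ l, Q k l * ζ k * totPay θ (G k l) (ps.2.1 k) ((ts 1).1 l) := by
      rw [Finset.mul_sum, Finset.mul_sum, ← Finset.sum_add_distrib]
      exact Finset.sum_congr rfl fun l _ => by ring
    rw [e2]
    have : x k = (w 0 + w 1) * x k := by rw [hw2, one_mul]
    linear_combination (-(ps.1.1 k)) * this
end

section
/- (Independent case.) Assume θ_1 < 1. Let q∈Δ(L) and let Q_q∈Δ(L)^K be the constant transition Q_q(·|k) := q for all k; write w_θ(x,q) := w_θ(x,Q_q;𝟏). Then for every x∈ℝ^K: w_θ(x,q) = (1−θ_1)·min_{τ∈Δ(J)^L} min_{(x_{ij})∈(ℝ^K)^{I×J}, with Σ_{j∈J} τ̄(j)·x_{ij} = (x − θ_1·G^q_{iτ})/(1−θ_1) for every i∈I} max_{i∈I} Σ_{j∈J} τ̄(j)·w_{θ^+}(x_{ij}, q_j), where τ̄(j) := Σ_ℓ q^ℓ τ^ℓ(j), q_j∈Δ(L) is defined by q_j^ℓ := q^ℓτ^ℓ(j)/τ̄(j) when τ̄(j)>0 and q_j := q otherwise, w_{θ^+}(·,q_j) := w_{θ^+}(·,Q_{q_j};𝟏),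 and G^{k,q}_{iτ} := Σ_{ℓ,j} q^ℓ τ^ℓ(j) G^{kℓ}(i,j). -/
open scoped BigOperators

def IsS18 {I J A : Type*} [Fintype A] (s : List (I × J) → A → ℝ) : Prop :=
  ∀ h, s h ∈ stdSimplex ℝ A

lemma stagePay_zero18 {I J : Type*} [Fintype I] [Fintype J]
    (s : List (I × J) → I → ℝ) (t : List (I × J) → J → ℝ) (g : I → J → ℝ) :
    stagePay s t g 0 = ∑ i, ∑ j, s [] i * t [] j * g i j := by
  simp [stagePay, probH]

lemma stagePay_succ18 {I J : Type*} [Fintype I] [Fintype J]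
    (s : List (I × J) → I → ℝ) (t : List (I × J) → J → ℝ) (g : I → J → ℝ) (m : ℕ) :
    stagePay s t g (m + 1) = ∑ i, ∑ j, s [] i * t [] j *
      stagePay (fun h => s ((i, j) :: h)) (fun h => t ((i, j) :: h)) g m := by
  unfold stagePay
  rw [← (Fin.consEquiv (fun _ : Fin (m + 1) => I × J)).sum_comp, Fintype.sum_prod_type,
    Fintype.sum_prod_type]
  refine Finset.sum_congr rfl fun i _ => Finset.sum_congr rfl fun j _ => ?_
  rw [Finset.mul_sum]
  refine Finset.sum_congr rfl fun h _ => ?_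
  simp [Fin.consEquiv, List.ofFn_succ, probH, mul_assoc]

lemma stagePay_bound18 {I J : Type*} [Fintype I] [Fintype J] (g : I → J → ℝ) (m : ℕ) :
    ∀ (s : List (I × J) → I → ℝ) (t : List (I × J) → J → ℝ), IsS18 s → IsS18 t →
    |stagePay s t g m| ≤ ∑ i, ∑ j, |g i j| := by
  have key : ∀ (a : I → ℝ) (b : J → ℝ) (f : I → J → ℝ) (B : ℝ), a ∈ stdSimplex ℝ I →
      b ∈ stdSimplex ℝ J → (∀ i j, |f i j| ≤ B) →
      |∑ i, ∑ j, a i * b j * f i j| ≤ B := by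
    intro a b f B ha hb hf
    calc |∑ i, ∑ j, a i * b j * f i j| ≤ ∑ i, ∑ j, a i * b j * B := by
          refine (Finset.abs_sum_le_sum_abs _ _).trans (Finset.sum_le_sum fun i _ => ?_)
          refine (Finset.abs_sum_le_sum_abs _ _).trans (Finset.sum_le_sum fun j _ => ?_)
          have h0 : 0 ≤ a i * b j := mul_nonneg (ha.1 i) (hb.1 j)
          rw [abs_mul, abs_of_nonneg h0]
          exact mul_le_mul_of_nonneg_left (hf i j) h0
      _ = B := by
          simp_rw [← Finset.sum_mul, ← Finset.mul_sum, hb.2, mul_one, ha.2, one_mul]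
  induction m with
  | zero =>
    intro s t hs ht
    rw [stagePay_zero18]
    refine key _ _ _ _ (hs _) (ht _) fun i j => ?_
    exact (Finset.single_le_sum (f := fun j => |g i j|) (fun j _ => abs_nonneg _)
      (Finset.mem_univ j)).trans (Finset.single_le_sum (f := fun i => ∑ j, |g i j|)
      (fun i _ => Finset.sum_nonneg fun j _ => abs_nonneg _) (Finset.mem_univ i))
  | succ m ih =>
    intro s t hs ht
    rw [stagePay_succ18]
    exact key _ _ _ _ (hs _) (ht _) fun i j => ih _ _ (fun h => hs _) (fun h => ht _)

lemma probH_cont18 {I J T : Type*} [TopologicalSpace T] (h : List (I × J)) :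
    ∀ (s : List (I × J) → I → ℝ) (t : T → List (I × J) → J → ℝ),
    (∀ h j, Continuous fun a => t a h j) → Continuous fun a => probH s (t a) h := by
  induction h with
  | nil => intro s t ht; simp only [probH]; exact continuous_const
  | cons a h ih =>
    intro s t ht
    simp only [probH]
    exact (continuous_const.mul (ht _ _)).mul (ih _ _ fun h j => ht _ _)

lemma stagePay_cont18 {I J T : Type*} [Fintype I] [Fintype J] [TopologicalSpace T]
    (s : List (I × J) → I → ℝ) (t : T → List (I × J) → J → ℝ)
    (ht : ∀ h j, Continuous fun a => t a h j) (g : I → J → ℝ) (m : ℕ) :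
    Continuous fun a => stagePay s (t a) g m := by
  unfold stagePay
  refine continuous_finsetSum _ fun h _ => (probH_cont18 _ _ _ ht).mul ?_
  refine continuous_finsetSum _ fun i _ => continuous_finsetSum _ fun j _ => ?_
  exact (continuous_const.mul (ht _ _)).mul continuous_const

/-- reward of type `k`. -/
noncomputable def F18 {I J K L : Type*} [Fintype I] [Fintype J] [Fintype L]
    (θ : ℕ → ℝ) (G : K → L → I → J → ℝ) (k : K) (q : L → ℝ)
    (s : List (I × J) → I → ℝ) (t : L → List (I × J) → J → ℝ) : ℝ :=
  ∑ l, q l * ∑' m : ℕ, θ m * stagePay s (t l) (G k l) m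

section
variable {I J K L : Type*} [Fintype I] [Fintype J] [Fintype K] [Fintype L]

lemma summable18 {θ : ℕ → ℝ} (h0 : ∀ m, 0 ≤ θ m) (hs : Summable θ)
    (s : List (I × J) → I → ℝ) (t : List (I × J) → J → ℝ) (h1 : IsS18 s) (h2 : IsS18 t)
    (g : I → J → ℝ) : Summable fun m => θ m * stagePay s t g m := by
  refine Summable.of_norm_bounded (hs.mul_right (∑ i, ∑ j, |g i j|)) fun m => ?_
  rw [Real.norm_eq_abs, abs_mul, abs_of_nonneg (h0 m)]
  exact mul_le_mul_of_nonneg_left (stagePay_bound18 _ _ _ _ h1 h2) (h0 m)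

lemma F18_le {θ : ℕ → ℝ} (h0 : ∀ m, 0 ≤ θ m) (hs : Summable θ)
    (G : K → L → I → J → ℝ) (q : L → ℝ) :
    ∃ B : ℝ, ∀ k s (t : L → List (I × J) → J → ℝ), IsS18 s → (∀ l, IsS18 (t l)) →
      F18 θ G k q s t ≤ B := by
  refine ⟨∑ k, ∑ l, |q l| * ∑' m : ℕ, θ m * ∑ i, ∑ j, |G k l i j|, ?_⟩
  intro k s t h1 h2
  have hnn : ∀ k l, 0 ≤ |q l| * ∑' m : ℕ, θ m * ∑ i, ∑ j, |G k l i j| := fun k l =>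
    mul_nonneg (abs_nonneg _) (tsum_nonneg fun m => mul_nonneg (h0 m)
      (Finset.sum_nonneg fun i _ => Finset.sum_nonneg fun j _ => abs_nonneg _))
  refine le_trans ?_ (Finset.single_le_sum
    (f := fun k => ∑ l, |q l| * ∑' m : ℕ, θ m * ∑ i, ∑ j, |G k l i j|)
    (fun k _ => Finset.sum_nonneg fun l _ => hnn k l) (Finset.mem_univ k))
  refine Finset.sum_le_sum fun l _ => ?_
  refine (le_abs_self _).trans ?_
  rw [abs_mul]
  refine mul_le_mul_of_nonneg_left ?_ (abs_nonneg _)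
  rw [← Real.norm_eq_abs]
  refine tsum_of_norm_bounded (hs.mul_right _).hasSum fun m => ?_
  rw [Real.norm_eq_abs, abs_mul, abs_of_nonneg (h0 m)]
  exact mul_le_mul_of_nonneg_left (stagePay_bound18 _ _ _ _ h1 (h2 l)) (h0 m)

lemma hDual18 (θ : ℕ → ℝ) (G : K → L → I → J → ℝ) (x : K → ℝ) (q : L → ℝ) (p : K → ℝ)
    (s : Strat I J K I) (t : Strat I J L J) :
    hDual θ G x (fun _ l => q l) (fun _ => 1) p s t =
      ∑ k, p k * (F18 θ G k q (s.1 k) t.1 - x k) := by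
  simp only [hDual, payA, F18, mul_sub, Finset.sum_sub_distrib, Finset.mul_sum, mul_one,
    mul_assoc]

lemma wPlus18 [Nonempty K] [Nonempty I] [Nonempty J] {θ : ℕ → ℝ} (h0 : ∀ m, 0 ≤ θ m)
    (hs : Summable θ) (G : K → L → I → J → ℝ) (x : K → ℝ) (q : L → ℝ) :
    (∃ t : L → List (I × J) → J → ℝ, (∀ l, IsS18 (t l)) ∧ ∀ k s, IsS18 s →
      F18 θ G k q s t - x k ≤ wPlus θ G x (fun _ l => q l) (fun _ => 1)) ∧
    (∀ (t : L → List (I × J) → J → ℝ) (C : ℝ), (∀ l, IsS18 (t l)) →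
      (∀ k s, IsS18 s → F18 θ G k q s t - x k ≤ C) →
      wPlus θ G x (fun _ l => q l) (fun _ => 1) ≤ C) := by
  classical
  have hne : Nonempty (stdSimplex ℝ K) := 
    ⟨⟨Pi.single (Classical.arbitrary K) 1, single_mem_stdSimplex ℝ _⟩⟩
  let S : Set (L → List (I × J) → J → ℝ) := {f | ∀ x h, f x h ∈ stdSimplex ℝ J}
  have hSc : IsCompact S := by
    have : S = Set.pi Set.univ fun _ : L => Set.pi Set.univ fun _ : List (I × J) =>
        stdSimplex ℝ J := by
      ext f; simp [S, Set.mem_pi]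
    rw [this]
    exact isCompact_univ_pi fun _ => isCompact_univ_pi fun _ => isCompact_stdSimplex ℝ J
  let vl : Strat I J L J → L → List (I × J) → J → ℝ := fun t => t.1
  letI top : TopologicalSpace (Strat I J L J) := TopologicalSpace.induced vl inferInstance
  have hind : Topology.IsInducing vl := ⟨rfl⟩
  have hrange : vl '' Set.univ = S := by
    ext f
    constructor
    · rintro ⟨t, -, rfl⟩; exact t.2
    · intro hf; exact ⟨⟨f, hf⟩, trivial, rfl⟩
  haveI : CompactSpace (Strat I J L J) := ⟨by rw [hind.isCompact_iff, hrange]; exact hSc⟩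
  let Φ : Strat I J L J → ℝ := fun t => ⨆ ps : stdSimplex ℝ K × Strat I J K I,
    hDual θ G x (fun _ l => q l) (fun _ => 1) (ps.1 : K → ℝ) ps.2 t
  obtain ⟨B, hB⟩ := F18_le (I := I) (J := J) h0 hs G q
  have hle : ∀ (t : Strat I J L J) C, (∀ k s, IsS18 s → F18 θ G k q s t.1 - x k ≤ C) →
      ∀ ps : stdSimplex ℝ K × Strat I J K I,
      hDual θ G x (fun _ l => q l) (fun _ => 1) (ps.1 : K → ℝ) ps.2 t ≤ C := by
    intro t C h ps
    rw [hDual18]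
    calc _ ≤ ∑ k, (ps.1 : K → ℝ) k * C := Finset.sum_le_sum fun k _ =>
          mul_le_mul_of_nonneg_left (h k _ (ps.2.2 k)) (ps.1.2.1 k)
      _ = C := by
          rw [← Finset.sum_mul]
          have e : ∑ k, (ps.1 : K → ℝ) k = 1 := ps.1.2.2
          rw [e, one_mul]
  have hbdd : ∀ t, BddAbove (Set.range fun ps : stdSimplex ℝ K × Strat I J K I =>
      hDual θ G x (fun _ l => q l) (fun _ => 1) (ps.1 : K → ℝ) ps.2 t) := by
    intro t
    refine ⟨B + ∑ k, |x k|, ?_⟩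
    rintro _ ⟨ps, rfl⟩
    refine hle t _ (fun k s h => ?_) ps
    have h1 := hB k s t.1 h t.2
    have h2 : |x k| ≤ ∑ k, |x k| :=
      Finset.single_le_sum (f := fun k => |x k|) (fun _ _ => abs_nonneg _) (Finset.mem_univ k)
    have h3 := neg_abs_le (x k)
    linarith
  have hcont : ∀ (ps : stdSimplex ℝ K × Strat I J K I), Continuous fun t : Strat I J L J =>
      hDual θ G x (fun _ l => q l) (fun _ => 1) (ps.1 : K → ℝ) ps.2 t := by
    intro ps
    simp_rw [hDual18]
    refine continuous_finsetSum _ fun k _ => continuous_const.mul (Continuous.sub ?_ continuous_const)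
    unfold F18
    refine continuous_finsetSum _ fun l _ => continuous_const.mul ?_
    refine continuous_tsum (u := fun m => θ m * ∑ i, ∑ j, |G k l i j|) (fun m => ?_)
      (hs.mul_right _) fun m t => ?_
    · refine continuous_const.mul (stagePay_cont18 _ (fun t : Strat I J L J => t.1 l) ?_ _ _)
      intro h j
      have hc : Continuous fun t : Strat I J L J => t.1 := hind.continuous
      exact (continuous_apply j).comp ((continuous_apply h).comp ((continuous_apply l).comp hc))
    · rw [Real.norm_eq_abs, abs_mul, abs_of_nonneg (h0 m)]
      exact mul_le_mul_of_nonneg_left (stagePay_bound18 _ _ _ _ (ps.2.2 k) (t.2 l)) (h0 m)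
  have hlsc : LowerSemicontinuous Φ :=
    lowerSemicontinuous_ciSup hbdd fun ps => (hcont ps).lowerSemicontinuous
  obtain ⟨t0, -, ht0⟩ := (hlsc.lowerSemicontinuousOn Set.univ).exists_isMinOn
    Set.univ_nonempty isCompact_univ
  have hmin : ∀ t, Φ t0 ≤ Φ t := fun t => ht0 (Set.mem_univ t)
  have hbb : BddBelow (Set.range Φ) := ⟨Φ t0, by rintro _ ⟨t, rfl⟩; exact hmin t⟩
  have hw : wPlus θ G x (fun _ l => q l) (fun _ => 1) = ⨅ t, Φ t := rfl
  constructor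
  · refine ⟨t0.1, t0.2, fun k s h => ?_⟩
    have h1 : Φ t0 ≤ ⨅ t, Φ t := le_ciInf hmin
    rw [hw]
    refine le_trans ?_ h1
    have h2 := le_ciSup (hbdd t0)
      (⟨⟨Pi.single k 1, single_mem_stdSimplex ℝ k⟩, ⟨fun _ => s, fun _ => h⟩⟩ :
        stdSimplex ℝ K × Strat I J K I)
    refine le_trans (le_of_eq ?_) h2
    refine Eq.trans ?_ (hDual18 θ G x q (Pi.single k 1)
      (⟨fun _ => s, fun _ => h⟩ : Strat I J K I) t0).symm
    rw [Finset.sum_eq_single k]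
    · simp
    · intro b _ hb; simp [hb]
    · simp
  · intro t C ht h
    rw [hw]
    exact (ciInf_le hbb ⟨t, ht⟩).trans (ciSup_le (hle ⟨t, ht⟩ C h))

lemma F18_rec {θ : ℕ → ℝ} (h0 : ∀ m, 0 ≤ θ m) (hs : Summable θ) (hlt : θ 0 < 1)
    (θplus : ℕ → ℝ) (hθplus : ∀ m, θplus m = θ (m + 1) / (1 - θ 0))
    (G : K → L → I → J → ℝ) (k : K) (q : L → ℝ)
    (s : List (I × J) → I → ℝ) (t : L → List (I × J) → J → ℝ)
    (h1 : IsS18 s) (h2 : ∀ l, IsS18 (t l))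
    (b : J → ℝ) (qq : J → L → ℝ) (hb : ∀ l j, q l * t l [] j = b j * qq j l) :
    F18 θ G k q s t = ∑ i, s [] i * (θ 0 * (∑ l, ∑ j, q l * t l [] j * G k l i j) +
      (1 - θ 0) * ∑ j, b j * F18 θplus G k (qq j) (fun h => s ((i, j) :: h))
        (fun l h => t l ((i, j) :: h))) := by
  have hpos : (1 - θ 0) ≠ 0 := by linarith
  have hp0 : ∀ m, 0 ≤ θplus m := fun m => by
    rw [hθplus]; exact div_nonneg (h0 _) (by linarith)
  have hps : Summable θplus := by
    have : θplus = fun m => θ (m + 1) / (1 - θ 0) := funext hθplus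
    rw [this]
    exact ((summable_nat_add_iff 1).mpr hs).div_const _
  have hth : ∀ m, θ (m + 1) = (1 - θ 0) * θplus m := fun m => by
    rw [hθplus]; field_simp
  have hts : ∀ l, ∑' m : ℕ, θ m * stagePay s (t l) (G k l) m =
      θ 0 * (∑ i, ∑ j, s [] i * t l [] j * G k l i j) + (1 - θ 0) * ∑ i, ∑ j, s [] i * t l [] j *
        ∑' m : ℕ, θplus m * stagePay (fun h => s ((i, j) :: h)) (fun h => t l ((i, j) :: h))
          (G k l) m := by
    intro l
    rw [(summable18 h0 hs s (t l) h1 (h2 l) (G k l)).tsum_eq_zero_add, stagePay_zero18]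
    congr 1
    have hsm : ∀ i j, Summable fun m => θplus m *
        stagePay (fun h => s ((i, j) :: h)) (fun h => t l ((i, j) :: h)) (G k l) m :=
      fun i j => summable18 hp0 hps _ _ (fun h => h1 _) (fun h => h2 l _) _
    have : ∀ m, θ (m + 1) * stagePay s (t l) (G k l) (m + 1) = (1 - θ 0) * ∑ i, ∑ j,
        s [] i * t l [] j * (θplus m *
        stagePay (fun h => s ((i, j) :: h)) (fun h => t l ((i, j) :: h)) (G k l) m) := by
      intro m
      rw [hth, stagePay_succ18, mul_assoc, Finset.mul_sum]
      congr 1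
      refine Finset.sum_congr rfl fun i _ => ?_
      rw [Finset.mul_sum]
      refine Finset.sum_congr rfl fun j _ => ?_
      ring
    simp_rw [this]
    rw [tsum_mul_left]
    congr 1
    rw [Summable.tsum_finsetSum fun i _ => summable_sum fun j _ => (hsm i j).mul_left _]
    refine Finset.sum_congr rfl fun i _ => ?_
    rw [Summable.tsum_finsetSum fun j _ => (hsm i j).mul_left _]
    refine Finset.sum_congr rfl fun j _ => ?_
    rw [tsum_mul_left]
  unfold F18
  simp_rw [hts, mul_add, Finset.sum_add_distrib]
  congr 1
  · simp_rw [Finset.mul_sum]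
    rw [Finset.sum_comm]
    refine Finset.sum_congr rfl fun i _ => Finset.sum_congr rfl fun l _ =>
      Finset.sum_congr rfl fun j _ => ?_
    ring
  · simp_rw [Finset.mul_sum]
    rw [Finset.sum_comm]
    refine Finset.sum_congr rfl fun i _ => ?_
    rw [Finset.sum_comm]
    refine Finset.sum_congr rfl fun j _ => Finset.sum_congr rfl fun l _ => ?_
    linear_combination ((1 - θ 0) * s [] i * ∑' m : ℕ, θplus m *
      stagePay (fun h => s ((i, j) :: h)) (fun h => t l ((i, j) :: h)) (G k l) m) * hb l j

end

/-- independent case, De Meyer–Marino: for `q ∈ Δ(L)` and the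
constant transition `Q_q(·|k) := q`, writing `w_θ(x,q) := w_θ(x,Q_q;𝟏)`:
`w_θ(x,q) = (1−θ_1)·min_τ min_{(x_{ij}) : Σ_j τ̄(j)x_{ij} = (x−θ_1G^q_{iτ})/(1−θ_1) ∀i}
max_i Σ_j τ̄(j)·w_{θ⁺}(x_{ij},q_j)`, the minimum being attained.
Here `τ̄(j) = Σ_ℓ q^ℓτ^ℓ(j)`, `q_j^ℓ = q^ℓτ^ℓ(j)/τ̄(j)` (with fallback `q`
when `τ̄(j) = 0`).  Stages are indexed from `0` (so `θ 0 = θ_1`); the value of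
the dual game is its minmax `wPlus`; maxima over the finite set `I` are written
as suprema. -/
theorem stmt_18
    {K L I J : Type*} [Fintype K] [Fintype L] [Fintype I] [Fintype J]
    [Nonempty K] [Nonempty L] [Nonempty I] [Nonempty J]
    (G : K → L → I → J → ℝ)
    (θ : ℕ → ℝ) (hθ0 : ∀ m, 0 ≤ θ m) (hθ1 : HasSum θ 1) (hθlt : θ 0 < 1)
    (θplus : ℕ → ℝ) (hθplus : ∀ m, θplus m = θ (m + 1) / (1 - θ 0))
    (x : K → ℝ) (q : L → ℝ) (hq : q ∈ stdSimplex ℝ L)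
    (τbar : (L → J → ℝ) → J → ℝ)
    (hτbar : ∀ τ j, τbar τ j = ∑ l, q l * τ l j)
    (qj : (L → J → ℝ) → J → L → ℝ)
    (hqj : ∀ τ j l, qj τ j l =
      if 0 < τbar τ j then q l * τ l j / τbar τ j else q l)
    (Gq : (L → J → ℝ) → I → K → ℝ)
    (hGq : ∀ τ i k, Gq τ i k = ∑ l, ∑ j, q l * τ l j * G k l i j) :
    ∃ c : ℝ,
      IsLeast
        {r : ℝ | ∃ τ : L → J → ℝ, (∀ l, τ l ∈ stdSimplex ℝ J) ∧
          ∃ xf : I → J → K → ℝ,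
            (∀ i k, (∑ j, τbar τ j * xf i j k) =
              (x k - θ 0 * Gq τ i k) / (1 - θ 0)) ∧
            r = ⨆ i, ∑ j, τbar τ j *
              wPlus θplus G (xf i j) (fun _ l => qj τ j l) (fun _ => 1)} c ∧
      wPlus (I := I) (J := J) θ G x (fun _ l => q l) (fun _ => 1) =
        (1 - θ 0) * c := by
  classical
  have hs := hθ1.summable
  have hpos : 0 < 1 - θ 0 := by linarith
  have hne : (1 - θ 0) ≠ 0 := hpos.ne'
  have hp0 : ∀ m, 0 ≤ θplus m := fun m => by
    rw [hθplus]; exact div_nonneg (hθ0 _) hpos.le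
  have hps : Summable θplus := by
    have : θplus = fun m => θ (m + 1) / (1 - θ 0) := funext hθplus
    rw [this]
    exact ((summable_nat_add_iff 1).mpr hs).div_const _
  have hb0 : ∀ τ : L → J → ℝ, (∀ l, τ l ∈ stdSimplex ℝ J) → ∀ j, 0 ≤ τbar τ j := by
    intro τ hτ j
    rw [hτbar]
    exact Finset.sum_nonneg fun l _ => mul_nonneg (hq.1 l) ((hτ l).1 j)
  have hb1 : ∀ τ : L → J → ℝ, (∀ l, τ l ∈ stdSimplex ℝ J) → ∑ j, τbar τ j = 1 := by
    intro τ hτ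
    simp_rw [hτbar]
    rw [Finset.sum_comm]
    simp_rw [← Finset.mul_sum, (hτ _).2, mul_one, hq.2]
  have hbq : ∀ τ : L → J → ℝ, (∀ l, τ l ∈ stdSimplex ℝ J) → ∀ l j,
      q l * τ l j = τbar τ j * qj τ j l := by
    intro τ hτ l j
    rw [hqj]
    split_ifs with h
    · field_simp
    · have h1 : τbar τ j = 0 := le_antisymm (not_lt.mp h) (hb0 τ hτ j)
      rw [h1, zero_mul]
      rw [hτbar] at h1
      exact (Finset.sum_eq_zero_iff_of_nonneg fun l _ =>
        mul_nonneg (hq.1 l) ((hτ l).1 j)).mp h1 l (Finset.mem_univ l)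
  set w := wPlus (I := I) (J := J) θ G x (fun _ l => q l) (fun _ => 1) with hw
  -- lower bound
  have hlow : ∀ τ : L → J → ℝ, (∀ l, τ l ∈ stdSimplex ℝ J) → ∀ xf : I → J → K → ℝ,
      (∀ i k, (∑ j, τbar τ j * xf i j k) = (x k - θ 0 * Gq τ i k) / (1 - θ 0)) →
      w ≤ (1 - θ 0) * ⨆ i, ∑ j, τbar τ j *
              wPlus θplus G (xf i j) (fun _ l => qj τ j l) (fun _ => 1) := by
    intro τ hτ xf hxf
    choose T hT hT' using fun i j => (wPlus18 (I := I) (J := J) hp0 hps G (xf i j) (qj τ j)).1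
    let t : L → List (I × J) → J → ℝ := fun l h => match h with
      | [] => τ l
      | a :: h => T a.1 a.2 l h
    have ht : ∀ l, IsS18 (t l) := by
      intro l h
      cases h with
      | nil => exact hτ l
      | cons a h => exact hT a.1 a.2 l h
    refine (wPlus18 (I := I) (J := J) hθ0 hs G x q).2 t _ ht fun k s hss => ?_
    rw [F18_rec hθ0 hs hθlt θplus hθplus G k q s t hss ht (τbar τ) (qj τ) (hbq τ hτ)]
    set r := ⨆ i, ∑ j, τbar τ j *
              wPlus θplus G (xf i j) (fun _ l => qj τ j l) (fun _ => 1) with hr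
    have hri : ∀ i, ∑ j, τbar τ j *
              wPlus θplus G (xf i j) (fun _ l => qj τ j l) (fun _ => 1) ≤ r := fun i =>
      le_ciSup (f := fun i => ∑ j, τbar τ j *
              wPlus θplus G (xf i j) (fun _ l => qj τ j l) (fun _ => 1))
        (Set.finite_range _).bddAbove i
    have hi : ∀ i, (θ 0 * (∑ l, ∑ j, q l * t l [] j * G k l i j) +
      (1 - θ 0) * ∑ j, τbar τ j * F18 θplus G k (qj τ j) (fun h => s ((i, j) :: h))
        (fun l h => t l ((i, j) :: h))) ≤ x k + (1 - θ 0) * r := by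
      intro i
      have e1 : ∑ l, ∑ j, q l * t l [] j * G k l i j = Gq τ i k := (hGq τ i k).symm
      have e2 : ∑ j, τbar τ j * F18 θplus G k (qj τ j) (fun h => s ((i, j) :: h))
          (fun l h => t l ((i, j) :: h)) ≤ ∑ j, τbar τ j * xf i j k + ∑ j, τbar τ j *
              wPlus θplus G (xf i j) (fun _ l => qj τ j l) (fun _ => 1) := by
        rw [← Finset.sum_add_distrib]
        refine Finset.sum_le_sum fun j _ => ?_
        rw [← mul_add]
        refine mul_le_mul_of_nonneg_left ?_ (hb0 τ hτ j)
        have := hT' i j k (fun h => s ((i, j) :: h)) (fun h => hss _)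
        change F18 θplus G k (qj τ j) _ (T i j) ≤ _
        linarith
      rw [hxf] at e2
      have e3 := mul_le_mul_of_nonneg_left (e2.trans (add_le_add_right (hri i) _)) hpos.le
      rw [mul_add, mul_div_cancel₀ _ hne] at e3
      rw [e1]
      linarith
    have : ∑ i, s [] i * (θ 0 * (∑ l, ∑ j, q l * t l [] j * G k l i j) +
      (1 - θ 0) * ∑ j, τbar τ j * F18 θplus G k (qj τ j) (fun h => s ((i, j) :: h))
        (fun l h => t l ((i, j) :: h))) ≤ ∑ i, s [] i * (x k + (1 - θ 0) * r) :=
      Finset.sum_le_sum fun i _ => mul_le_mul_of_nonneg_left (hi i) ((hss []).1 i)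
    rw [← Finset.sum_mul, (hss []).2, one_mul] at this
    linarith
  -- attainment
  have hatt : ∃ τ : L → J → ℝ, (∀ l, τ l ∈ stdSimplex ℝ J) ∧ ∃ xf : I → J → K → ℝ,
      (∀ i k, (∑ j, τbar τ j * xf i j k) = (x k - θ 0 * Gq τ i k) / (1 - θ 0)) ∧
      (⨆ i, ∑ j, τbar τ j *
        wPlus θplus G (xf i j) (fun _ l => qj τ j l) (fun _ => 1)) ≤ w / (1 - θ 0) := by
    obtain ⟨t, ht, htw⟩ := (wPlus18 (I := I) (J := J) hθ0 hs G x q).1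
    rw [← hw] at htw
    let τ : L → J → ℝ := fun l => t l []
    have hτ : ∀ l, τ l ∈ stdSimplex ℝ J := fun l => ht l []
    let tc : I → J → L → List (I × J) → J → ℝ := fun i j l h => t l ((i, j) :: h)
    have htc : ∀ i j l, IsS18 (tc i j l) := fun i j l h => ht l _
    obtain ⟨s0⟩ : Nonempty (Strat I J Unit I) := inferInstance
    let σ := {s : List (I × J) → I → ℝ // IsS18 s}
    haveI : Nonempty σ := ⟨⟨s0.1 (), s0.2 ()⟩⟩
    let R : I → J → K → ℝ := fun i j k => ⨆ s : σ, F18 θplus G k (qj τ j) s.1 (tc i j)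
    have hRb : ∀ i j k, BddAbove (Set.range fun s : σ =>
        F18 θplus G k (qj τ j) s.1 (tc i j)) := by
      intro i j k
      obtain ⟨B, hB⟩ := F18_le (I := I) (J := J) hp0 hps G (qj τ j)
      exact ⟨B, by rintro _ ⟨s, rfl⟩; exact hB k s.1 _ s.2 (htc i j)⟩
    have hR : ∀ i k, θ 0 * Gq τ i k + (1 - θ 0) * ∑ j, τbar τ j * R i j k ≤ x k + w := by
      intro i k
      refine le_of_forall_pos_le_add fun ε hε => ?_
      have hex : ∀ j, ∃ s : σ, R i j k - ε < F18 θplus G k (qj τ j) s.1 (tc i j) := fun j =>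
        exists_lt_of_lt_ciSup (by change R i j k - ε < R i j k; linarith)
      choose sj hsj using hex
      let s : List (I × J) → I → ℝ := fun h => match h with
        | [] => Pi.single i 1
        | a :: h => (sj a.2).1 h
      have hss : IsS18 s := by
        intro h
        cases h with
        | nil => exact single_mem_stdSimplex ℝ i
        | cons a h => exact (sj a.2).2 h
      have h1 := htw k s hss
      rw [F18_rec hθ0 hs hθlt θplus hθplus G k q s t hss ht (τbar τ) (qj τ) (hbq τ hτ)] at h1
      rw [Finset.sum_eq_single i (by intro b _ hb; simp [s, hb]) (by simp)] at h1
      have e1 : ∑ l, ∑ j, q l * t l [] j * G k l i j = Gq τ i k := (hGq τ i k).symm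
      have e0 : s [] i = 1 := by simp [s]
      rw [e1, e0, one_mul] at h1
      have e2 : ∑ j, τbar τ j * R i j k ≤ ∑ j, τbar τ j * F18 θplus G k (qj τ j)
          (fun h => s ((i, j) :: h)) (fun l h => t l ((i, j) :: h)) + ε := by
        calc _ ≤ ∑ j, τbar τ j * (F18 θplus G k (qj τ j)
              (fun h => s ((i, j) :: h)) (fun l h => t l ((i, j) :: h)) + ε) := by
              refine Finset.sum_le_sum fun j _ => mul_le_mul_of_nonneg_left ?_ (hb0 τ hτ j)
              have := hsj j
              change _ ≤ F18 θplus G k (qj τ j) (sj j).1 (tc i j) + ε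
              linarith
          _ = _ := by
              simp_rw [mul_add]
              rw [Finset.sum_add_distrib, ← Finset.sum_mul, hb1 τ hτ, one_mul]
      have e3 := mul_le_mul_of_nonneg_left e2 hpos.le
      have e4 : (1 - θ 0) * ε ≤ ε := by nlinarith [hθ0 0]
      rw [mul_add] at e3
      linarith
    let D : I → K → ℝ := fun i k =>
      ∑ j, τbar τ j * R i j k - (x k - θ 0 * Gq τ i k) / (1 - θ 0)
    have hD : ∀ i k, D i k ≤ w / (1 - θ 0) := by
      intro i k
      have h1 := hR i k
      simp only [D]
      rw [sub_le_iff_le_add, ← add_div, le_div_iff₀ hpos]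
      linarith
    refine ⟨τ, hτ, fun i j k => R i j k - D i k, ?_, ?_⟩
    · intro i k
      simp_rw [mul_sub]
      rw [Finset.sum_sub_distrib, ← Finset.sum_mul, hb1 τ hτ, one_mul]
      simp only [D]
      ring
    · refine ciSup_le fun i => ?_
      calc _ ≤ ∑ j, τbar τ j * (w / (1 - θ 0)) := by
            refine Finset.sum_le_sum fun j _ => mul_le_mul_of_nonneg_left ?_ (hb0 τ hτ j)
            refine (wPlus18 (I := I) (J := J) hp0 hps G _ (qj τ j)).2 (tc i j) _ (htc i j) ?_
            intro k s hss
            have h1 : F18 θplus G k (qj τ j) s (tc i j) ≤ R i j k :=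
              le_ciSup (hRb i j k) (⟨s, hss⟩ : σ)
            have h2 := hD i k
            linarith
        _ = _ := by rw [← Finset.sum_mul, hb1 τ hτ, one_mul]
  refine ⟨w / (1 - θ 0), ⟨?_, ?_⟩, (mul_div_cancel₀ _ hne).symm⟩
  · obtain ⟨τ, hτ, xf, hxf, hle⟩ := hatt
    refine ⟨τ, hτ, xf, hxf, le_antisymm ?_ hle⟩
    rw [div_le_iff₀' hpos]
    exact hlow τ hτ xf hxf
  · rintro r ⟨τ, hτ, xf, hxf, rfl⟩
    rw [div_le_iff₀' hpos]
    exact hlow τ hτ xf hxf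
end
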